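/- For all s, t ≥ 1, the resilience of the t-th power of the (t(2^s−1)) × (t(2^s−1)) grid graph (with king-move adjacency) is at most 4·t²·2^s. -/

import Mathlib

open SimpleGraph

/-- One step of a disintegration: `D` consists of exactly one vertex from each
connected component of the subgraph of `G` induced on `R`. -/
def DisStep {V : Type*} (G : SimpleGraph V) (R D : Set V) : Prop :=
  ∃ hsub : D ⊆ R,
    (∀ (v w : V) (hv : v ∈ D) (hw : w ∈ D), v ≠ w →
      (G.induce R).connectedComponentMk ⟨v, hsub hv⟩ ≠
        (G.induce R).connectedComponentMk ⟨w, hsub hw⟩) ∧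
    (∀ c : (G.induce R).ConnectedComponent, ∃ (v : V) (hv : v ∈ D),
      (G.induce R).connectedComponentMk ⟨v, hsub hv⟩ = c)

/-- `(D 0, D 1, ..., D (r-1))` is a disintegration of `G`: the steps partition the
vertex set and each step removes exactly one vertex per connected component of what remains. -/
def IsDisintegration {V : Type*} (G : SimpleGraph V) (D : ℕ → Set V) (r : ℕ) : Prop :=
  (∀ i, r ≤ i → D i = ∅) ∧ (⋃ i, D i) = Set.univ ∧
    ∀ i, DisStep G (Set.univ \ ⋃ j < i, D j) (D i)

/-- The graph resilience: minimal length of a disintegration. -/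
noncomputable def resilience {V : Type*} (G : SimpleGraph V) : ℕ :=
  sInf {r | ∃ D, IsDisintegration G D r}

/-- The `t`-th power of a graph: two distinct vertices are adjacent when their
graph distance in `G` is at most `t`. -/
def powerGraph {V : Type*} (G : SimpleGraph V) (t : ℕ) : SimpleGraph V :=
  SimpleGraph.fromRel (fun a b => G.Reachable a b ∧ G.dist a b ≤ t)

/-- The `k × k` grid graph with king-move adjacency. -/
def gridGraph (k : ℕ) : SimpleGraph (Fin k × Fin k) :=
  SimpleGraph.fromRel (fun a b =>
    |(a.1.val : ℤ) - (b.1.val : ℤ)| ≤ 1 ∧ |(a.2.val : ℤ) - (b.2.val : ℤ)| ≤ 1)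

/-- A greedy step: in each component choose a vertex of maximal rank. -/
lemma exists_step {V : Type*} (G : SimpleGraph V) (f : V → ℕ) (r : ℕ) (hf : ∀ v, f v < r)
    (H : ∀ u v, f u = f v → ∀ R : Set V, (∀ w ∈ R, f w ≤ f u) → ∀ (hu : u ∈ R) (hv : v ∈ R),
      (G.induce R).Reachable ⟨u, hu⟩ ⟨v, hv⟩ → u = v) (R : Set V) :
    ∃ D : Set V, DisStep G R D ∧
      ∀ m, (∀ v ∈ R, f v ≤ m) → ∀ v ∈ R, f v = m → v ∈ D := by
  classical
  have key : ∀ c : (G.induce R).ConnectedComponent, ∃ v : R,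
      (G.induce R).connectedComponentMk v = c ∧
      ∀ w : R, (G.induce R).connectedComponentMk w = c → f w ≤ f v := by
    intro c
    have hne : ∃ n, ∃ v : R, (G.induce R).connectedComponentMk v = c ∧ r - f v = n := by
      obtain ⟨v, hv⟩ := c.exists_rep
      exact ⟨_, v, hv, rfl⟩
    obtain ⟨v, hv, hn⟩ := Nat.find_spec hne
    refine ⟨v, hv, fun w hw => ?_⟩
    have h1 := Nat.find_min' hne ⟨w, hw, rfl⟩
    have := hf v
    have := hf w
    omega
  choose p hp hmax using key
  refine ⟨{v | ∃ c, (p c : V) = v}, ⟨?_, ?_, ?_⟩, ?_⟩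
  · rintro _ ⟨c, rfl⟩
    exact (p c).2
  · rintro _ _ ⟨c, rfl⟩ ⟨d, rfl⟩ hne heq
    apply hne
    have h1 : c = d := by
      rw [← hp c, ← hp d]
      exact heq
    rw [h1]
  · intro c
    exact ⟨p c, ⟨c, rfl⟩, hp c⟩
  · intro m hm v hv hvm
    refine ⟨(G.induce R).connectedComponentMk ⟨v, hv⟩, ?_⟩
    set c := (G.induce R).connectedComponentMk ⟨v, hv⟩ with hc
    have h1 : f v ≤ f (p c) := hmax c ⟨v, hv⟩ rfl
    have h2 : f (p c) ≤ m := hm _ (p c).2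
    have h3 : f (p c) = f v := by omega
    refine H _ _ h3 R (fun w hw => ?_) (p c).2 hv ?_
    · have := hm w hw
      omega
    · exact SimpleGraph.ConnectedComponent.exact (hp c)

/-- A vertex ranking with `r` ranks bounds the resilience by `r`. -/
lemma resilience_le_of_ranking {V : Type*} (G : SimpleGraph V) (f : V → ℕ) (r : ℕ)
    (hf : ∀ v, f v < r)
    (H : ∀ u v, f u = f v → ∀ R : Set V, (∀ w ∈ R, f w ≤ f u) → ∀ (hu : u ∈ R) (hv : v ∈ R),
      (G.induce R).Reachable ⟨u, hu⟩ ⟨v, hv⟩ → u = v) :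
    resilience G ≤ r := by
  choose P hP hPm using exists_step G f r hf H
  let Rem : ℕ → Set V := fun n => Nat.rec Set.univ (fun _ S => S \ P S) n
  have hRem : ∀ i, (Set.univ \ ⋃ j < i, P (Rem j)) = Rem i := by
    intro i
    induction i with
    | zero => simp [Rem]
    | succ i ih =>
      have h1 : Rem (i + 1) = Rem i \ P (Rem i) := rfl
      rw [Set.biUnion_lt_succ, h1, ← Set.sdiff_sdiff, ih]
  have hlow : ∀ i, ∀ v ∈ Rem i, f v + i < r := by
    intro i
    induction i with
    | zero => intro v _; simpa using hf v
    | succ i ih =>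
      intro v hv
      have hv' : v ∈ Rem i \ P (Rem i) := hv
      by_contra hcon
      have h1 := ih v hv'.1
      refine hv'.2 (hPm (Rem i) (f v) (fun w hw => ?_) v hv'.1 rfl)
      have := ih w hw
      omega
  refine Nat.sInf_le ⟨fun i => P (Rem i), ?_, ?_, ?_⟩
  · intro i hi
    ext v
    simp only [Set.mem_empty_iff_false, iff_false]
    intro hv
    obtain ⟨hsub, -⟩ := hP (Rem i)
    have := hlow i v (hsub hv)
    omega
  · ext v
    simp only [Set.mem_univ, iff_true]
    by_contra hcon
    have h2 : v ∈ Rem r := by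
      rw [← hRem]
      refine ⟨trivial, fun h => hcon ?_⟩
      simp only [Set.mem_iUnion] at h ⊢
      obtain ⟨j, _, hj⟩ := h
      exact ⟨j, hj⟩
    have := hlow r v h2
    omega
  · intro i
    rw [hRem]
    exact hP _

lemma grid_walk {k : ℕ} {a b : Fin k × Fin k} (p : (gridGraph k).Walk a b) :
    a.1.val ≤ b.1.val + p.length ∧ b.1.val ≤ a.1.val + p.length ∧
    a.2.val ≤ b.2.val + p.length ∧ b.2.val ≤ a.2.val + p.length := by
  induction p with
  | nil => simp
  | cons h p ih =>
    simp only [gridGraph, SimpleGraph.fromRel_adj, abs_le] at h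
    simp only [SimpleGraph.Walk.length_cons]
    omega

lemma power_adj {k t : ℕ} {a b : Fin k × Fin k} (h : (powerGraph (gridGraph k) t).Adj a b) :
    a.1.val ≤ b.1.val + t ∧ b.1.val ≤ a.1.val + t ∧
    a.2.val ≤ b.2.val + t ∧ b.2.val ≤ a.2.val + t := by
  simp only [powerGraph, SimpleGraph.fromRel_adj] at h
  rcases h.2 with ⟨h1, h2⟩ | ⟨h1, h2⟩
  · obtain ⟨p, hp⟩ := h1.exists_walk_length_eq_dist
    have := grid_walk p
    omega
  · obtain ⟨p, hp⟩ := h1.exists_walk_length_eq_dist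
    have := grid_walk p
    omega

/-- Level of a (shifted) coordinate. -/
def lev (t X : ℕ) : ℕ := padicValNat 2 (X / t)

/-- The index of a vertex within the central cross of its level. -/
def idx (t j X Y : ℕ) : ℕ :=
  if lev t X = j then X % t * (t * 2 ^ (j + 1)) + Y % (t * 2 ^ (j + 1))
  else t * (t * 2 ^ (j + 1)) + (Y % t * (t * 2 ^ (j + 1)) + X % (t * 2 ^ (j + 1)))

/-- The rank of a vertex with shifted coordinates. -/
def rk (t X Y : ℕ) : ℕ :=
  4 * t ^ 2 * (2 ^ (max (lev t X) (lev t Y)) - 1) + idx t (max (lev t X) (lev t Y)) X Y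

lemma mul_add_lt_aux {a b t M : ℕ} (ha : a < t) (hb : b < M) : a * M + b < t * M := by
  have : (a + 1) * M ≤ t * M := Nat.mul_le_mul_right M ha
  rw [Nat.add_mul] at this
  omega

lemma idx_lt (t j X Y : ℕ) (ht : 1 ≤ t) : idx t j X Y < 2 * (t * (t * 2 ^ (j + 1))) := by
  have hM : 0 < t * 2 ^ (j + 1) := by positivity
  unfold idx
  have h1 := mul_add_lt_aux (Nat.mod_lt X ht) (Nat.mod_lt Y hM)
  have h2 := mul_add_lt_aux (Nat.mod_lt Y ht) (Nat.mod_lt X hM)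
  split_ifs <;> omega

lemma mul_add_inj_aux {a b a' b' M : ℕ} (hb : b < M) (hb' : b' < M)
    (h : a * M + b = a' * M + b') : a = a' ∧ b = b' := by
  have h1 : a = a' := by
    rcases lt_trichotomy a a' with h1 | h1 | h1
    · have := mul_add_lt_aux h1 hb
      omega
    · exact h1
    · have := mul_add_lt_aux h1 hb'
      omega
  subst h1
  exact ⟨rfl, by omega⟩

lemma off_succ (t j : ℕ) :
    4 * t ^ 2 * (2 ^ j - 1) + 2 * (t * (t * 2 ^ (j + 1))) = 4 * t ^ 2 * (2 ^ (j + 1) - 1) := by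
  obtain ⟨c, hc⟩ : ∃ c, 2 ^ j = c + 1 := ⟨2 ^ j - 1, by have := Nat.one_le_two_pow (n := j); omega⟩
  have : 2 ^ (j + 1) = 2 * c + 1 + 1 := by rw [pow_succ, hc]; ring
  rw [this, hc]
  simp only [Nat.add_sub_cancel]
  ring

lemma rk_lt_off (t X Y : ℕ) (ht : 1 ≤ t) :
    rk t X Y < 4 * t ^ 2 * (2 ^ (max (lev t X) (lev t Y) + 1) - 1) := by
  rw [← off_succ]
  unfold rk
  have := idx_lt t (max (lev t X) (lev t Y)) X Y ht
  omega

lemma off_mono (t : ℕ) {i j : ℕ} (h : i ≤ j) :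
    4 * t ^ 2 * (2 ^ i - 1) ≤ 4 * t ^ 2 * (2 ^ j - 1) :=
  Nat.mul_le_mul_left _ (Nat.sub_le_sub_right (Nat.pow_le_pow_right (by norm_num) h) 1)

lemma lev_mono (t X Y X' Y' : ℕ) (ht : 1 ≤ t) (h : rk t X Y ≤ rk t X' Y') :
    max (lev t X) (lev t Y) ≤ max (lev t X') (lev t Y') := by
  by_contra hcon
  have h1 := rk_lt_off t X' Y' ht
  have h2 := off_mono t (show max (lev t X') (lev t Y') + 1 ≤ max (lev t X) (lev t Y) by omega)
  have h3 : 4 * t ^ 2 * (2 ^ (max (lev t X) (lev t Y)) - 1) ≤ rk t X Y := Nat.le_add_right _ _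
  omega

lemma lev_lt {s t X : ℕ} (ht : 1 ≤ t) (h1 : t ≤ X) (h2 : X < t * 2 ^ s) : lev t X < s := by
  have ha : 0 < X / t := Nat.div_pos h1 ht
  have hb : X / t < 2 ^ s := Nat.div_lt_of_lt_mul h2
  have hd : 2 ^ lev t X ∣ X / t := pow_padicValNat_dvd
  have := Nat.le_of_dvd ha hd
  exact (Nat.pow_lt_pow_iff_right (by norm_num : 1 < 2)).1 (lt_of_le_of_lt this hb)

lemma mod_ge_of_lev {t X j : ℕ} (ht : 1 ≤ t) (h1 : t ≤ X) (h : lev t X ≤ j) :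
    t ≤ X % (t * 2 ^ (j + 1)) := by
  by_contra hcon
  have ha : X / t ≠ 0 := (Nat.div_pos h1 ht).ne'
  have h2 : 2 ^ (j + 1) ∣ X / t := by
    apply Nat.dvd_of_mod_eq_zero
    rw [← Nat.mod_mul_right_div_self]
    exact Nat.div_eq_of_lt (by omega)
  have := (padicValNat_dvd_iff_le ha).1 h2
  unfold lev at h
  omega

lemma div_eq_of_close {t M X X' : ℕ} (hM : 0 < M) (h : t ≤ X % M) (h' : t ≤ X' % M)
    (h1 : X ≤ X' + t) (h2 : X' ≤ X + t) : X / M = X' / M := by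
  have e := Nat.div_add_mod X M
  have e' := Nat.div_add_mod X' M
  have l := Nat.mod_lt X hM
  have l' := Nat.mod_lt X' hM
  rcases lt_trichotomy (X / M) (X' / M) with h3 | h3 | h3
  · have := Nat.mul_le_mul_left M (show X / M + 1 ≤ X' / M from h3)
    rw [Nat.mul_add] at this
    omega
  · exact h3
  · have := Nat.mul_le_mul_left M (show X' / M + 1 ≤ X / M from h3)
    rw [Nat.mul_add] at this
    omega

lemma eq_of_div_mod {M X X' : ℕ} (h : X / M = X' / M) (h' : X % M = X' % M) : X = X' := by
  rw [← Nat.div_add_mod X M, ← Nat.div_add_mod X' M, h, h']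

lemma div_eq_of_lev {t X : ℕ} (j : ℕ) (ht : 1 ≤ t) (h1 : t ≤ X) (h : lev t X = j) :
    X / t = 2 ^ j * (2 * (X / (t * 2 ^ (j + 1))) + 1) := by
  have ha : X / t ≠ 0 := (Nat.div_pos h1 ht).ne'
  obtain ⟨o, ho⟩ : 2 ^ j ∣ X / t := by rw [← h]; exact pow_padicValNat_dvd
  have hodd : ¬ 2 ∣ o := by
    rintro ⟨q, rfl⟩
    have h2 : 2 ^ (j + 1) ∣ X / t := ⟨q, by rw [ho]; ring⟩
    have := (padicValNat_dvd_iff_le ha).1 h2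
    unfold lev at h
    omega
  rw [← Nat.div_div_eq_div_mul, pow_succ, ← Nat.div_div_eq_div_mul, ho,
    Nat.mul_div_cancel_left _ (by positivity)]
  congr 1
  omega

lemma idx_inj {t j X Y X' Y' : ℕ} (ht : 1 ≤ t) (hX : t ≤ X) (hY : t ≤ Y) (hX' : t ≤ X')
    (hY' : t ≤ Y') (hj : max (lev t X) (lev t Y) = j) (hj' : max (lev t X') (lev t Y') = j)
    (eX : X / (t * 2 ^ (j + 1)) = X' / (t * 2 ^ (j + 1)))
    (eY : Y / (t * 2 ^ (j + 1)) = Y' / (t * 2 ^ (j + 1)))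
    (h : idx t j X Y = idx t j X' Y') : X = X' ∧ Y = Y' := by
  have hM : 0 < t * 2 ^ (j + 1) := by positivity
  have a1 := mul_add_lt_aux (Nat.mod_lt X ht) (Nat.mod_lt Y hM)
  have a2 := mul_add_lt_aux (Nat.mod_lt X' ht) (Nat.mod_lt Y' hM)
  unfold idx at h
  split_ifs at h with c c' c'
  · obtain ⟨e1, e2⟩ := mul_add_inj_aux (Nat.mod_lt Y hM) (Nat.mod_lt Y' hM) h
    refine ⟨eq_of_div_mod (M := t) ?_ e1, eq_of_div_mod eY e2⟩
    rw [div_eq_of_lev j ht hX c, div_eq_of_lev j ht hX' c', eX]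
  · omega
  · omega
  · obtain ⟨e1, e2⟩ := mul_add_inj_aux (Nat.mod_lt X hM) (Nat.mod_lt X' hM)
      (Nat.add_left_cancel h)
    refine ⟨eq_of_div_mod eX e2, eq_of_div_mod (M := t) ?_ e1⟩
    rw [div_eq_of_lev j ht hY (by omega), div_eq_of_lev j ht hY' (by omega), eY]

theorem stmt12 (s t : ℕ) (hs : 1 ≤ s) (ht : 1 ≤ t) :
    resilience (powerGraph (gridGraph (t * (2 ^ s - 1))) t) ≤ 4 * t ^ 2 * 2 ^ s := by
  have hk : t * (2 ^ s - 1) + t = t * 2 ^ s := by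
    have := Nat.one_le_two_pow (n := s)
    rw [← Nat.mul_succ]
    congr 1
    omega
  refine resilience_le_of_ranking _ (fun v => rk t (v.1.val + t) (v.2.val + t)) _ ?_ ?_
  · intro v
    have h1 := v.1.2
    have h2 := v.2.2
    have l1 : lev t (v.1.val + t) < s := lev_lt ht (by omega) (by omega)
    have l2 : lev t (v.2.val + t) < s := lev_lt ht (by omega) (by omega)
    have := rk_lt_off t (v.1.val + t) (v.2.val + t) ht
    have h3 := off_mono t (show max (lev t (v.1.val + t)) (lev t (v.2.val + t)) + 1 ≤ s by omega)
    have h4 : 4 * t ^ 2 * (2 ^ s - 1) ≤ 4 * t ^ 2 * 2 ^ s :=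
      Nat.mul_le_mul_left _ (Nat.sub_le _ _)
    show rk t (v.1.val + t) (v.2.val + t) < _
    omega
  · intro u v huv R hR hu hv hreach
    obtain ⟨j, hj⟩ : ∃ j, max (lev t (u.1.val + t)) (lev t (u.2.val + t)) = j := ⟨_, rfl⟩
    have hM : 0 < t * 2 ^ (j + 1) := by positivity
    have hlev : ∀ w ∈ R, max (lev t (w.1.val + t)) (lev t (w.2.val + t)) ≤ j := by
      intro w hw
      rw [← hj]
      exact lev_mono _ _ _ _ _ ht (hR w hw)
    have hj' : max (lev t (v.1.val + t)) (lev t (v.2.val + t)) = j := by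
      refine le_antisymm (hlev v hv) ?_
      rw [← hj]
      exact lev_mono _ _ _ _ _ ht huv.le
    have hwalk : ∀ a b : R, ((powerGraph (gridGraph (t * (2 ^ s - 1))) t).induce R).Walk a b →
        (a.1.1.val + t) / (t * 2 ^ (j + 1)) = (b.1.1.val + t) / (t * 2 ^ (j + 1)) ∧
        (a.1.2.val + t) / (t * 2 ^ (j + 1)) = (b.1.2.val + t) / (t * 2 ^ (j + 1)) := by
      intro a b p
      induction p with
      | nil => exact ⟨rfl, rfl⟩
      | @cons a c b h p ih =>
        have hadj := power_adj (SimpleGraph.comap_adj.1 h)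
        simp only [Function.Embedding.subtype_apply] at hadj
        have la := hlev a.1 a.2
        have lc := hlev c.1 c.2
        rw [← ih.1, ← ih.2]
        constructor
        · exact div_eq_of_close hM (mod_ge_of_lev ht (by omega) (by omega))
            (mod_ge_of_lev ht (by omega) (by omega)) (by omega) (by omega)
        · exact div_eq_of_close hM (mod_ge_of_lev ht (by omega) (by omega))
            (mod_ge_of_lev ht (by omega) (by omega)) (by omega) (by omega)
    obtain ⟨p⟩ := hreach
    obtain ⟨eX, eY⟩ := hwalk _ _ p
    have hidx : idx t j (u.1.val + t) (u.2.val + t) = idx t j (v.1.val + t) (v.2.val + t) := by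
      unfold rk at huv
      rw [hj, hj'] at huv
      exact Nat.add_left_cancel huv
    obtain ⟨r1, r2⟩ := idx_inj ht (by omega) (by omega) (by omega) (by omega) hj hj' eX eY hidx
    refine Prod.ext (Fin.ext ?_) (Fin.ext ?_) <;> omega
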